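/- For every real number k > 0, the integral ∫₀^π 2·arctan(sin φ / k)·sin φ dφ equals 2π(√(k²+1) − k). -/

import Mathlib

open Real intervalIntegral

/-!
Integrating by parts and writing `cos² φ = (k² + 1) - (k² + sin² φ)` reduces the integral to
`∫₀^π dφ / (k² + sin² φ)`. Since `k² + sin² φ = k² cos² φ + (k² + 1) sin² φ`, that is an integral of
the form `∫ dφ / (a² cos² φ + b² sin² φ)`, whose integrand is, up to the factor `ab`, the rate of
change of the polar angle of the point `(a cos φ, b sin φ)` of an ellipse. This angle increases by
`π` as `φ` runs over `[0, π]`.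
-/

theorem mul_cos_sq_add_mul_sin_sq_pos {a b : ℝ} (ha : 0 < a) (hb : 0 < b) (x : ℝ) :
    0 < a * cos x ^ 2 + b * sin x ^ 2 := by
  rcases eq_or_ne (sin x) 0 with hsin | hsin
  · have hcos : cos x ^ 2 = 1 := by simpa [hsin] using sin_sq_add_cos_sq x
    simpa [hsin, hcos] using ha
  · positivity

/-- The polar angle of the point `(a cos x, b sin x)` of an ellipse with `a, b > 0`, in the branch
continuous in `x` that vanishes at `x = 0`. It is written as `x` plus the argument of
`(a cos x + i b sin x) e^{-ix}`, which has positive real part, so that `arctan` computes it for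
every `x`. -/
noncomputable def ellipsePolarAngle (a b x : ℝ) : ℝ :=
  x + arctan ((b - a) * (sin x * cos x) / (a * cos x ^ 2 + b * sin x ^ 2))

theorem ellipsePolarAngle_zero (a b : ℝ) : ellipsePolarAngle a b 0 = 0 := by
  simp [ellipsePolarAngle]

theorem ellipsePolarAngle_pi (a b : ℝ) : ellipsePolarAngle a b π = π := by
  simp [ellipsePolarAngle]

theorem hasDerivAt_arctan_div {f g : ℝ → ℝ} {f' g' x : ℝ} (hf : HasDerivAt f f' x)
    (hg : HasDerivAt g g' x) (hgx : g x ≠ 0) :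
    HasDerivAt (fun y ↦ arctan (f y / g y))
      ((f' * g x - f x * g') / (g x ^ 2 + f x ^ 2)) x := by
  refine (hf.fun_div hg hgx).arctan.congr_deriv ?_
  have : g x ^ 2 + f x ^ 2 ≠ 0 := by positivity
  field_simp

theorem hasDerivAt_ellipsePolarAngle {a b : ℝ} (ha : 0 < a) (hb : 0 < b) (x : ℝ) :
    HasDerivAt (ellipsePolarAngle a b)
      (a * b * (a ^ 2 * cos x ^ 2 + b ^ 2 * sin x ^ 2)⁻¹) x := by
  have hnum : HasDerivAt (fun y ↦ (b - a) * (sin y * cos y))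
      ((b - a) * (cos x ^ 2 - sin x ^ 2)) x :=
    (((hasDerivAt_sin x).fun_mul (hasDerivAt_cos x)).const_mul (b - a)).congr_deriv (by ring)
  have hden : HasDerivAt (fun y ↦ a * cos y ^ 2 + b * sin y ^ 2)
      (2 * (b - a) * (sin x * cos x)) x :=
    ((((hasDerivAt_cos x).fun_pow 2).const_mul a).fun_add
      (((hasDerivAt_sin x).fun_pow 2).const_mul b)).congr_deriv (by push_cast; ring)
  have hpos := mul_cos_sq_add_mul_sin_sq_pos ha hb x
  have hnorm : (a * cos x ^ 2 + b * sin x ^ 2) ^ 2 + ((b - a) * (sin x * cos x)) ^ 2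
      = a ^ 2 * cos x ^ 2 + b ^ 2 * sin x ^ 2 := by
    linear_combination (a ^ 2 * cos x ^ 2 + b ^ 2 * sin x ^ 2) * sin_sq_add_cos_sq x
  have hquotient_rule : (b - a) * (cos x ^ 2 - sin x ^ 2) * (a * cos x ^ 2 + b * sin x ^ 2)
      - (b - a) * (sin x * cos x) * (2 * (b - a) * (sin x * cos x))
      = a * b - (a ^ 2 * cos x ^ 2 + b ^ 2 * sin x ^ 2) := by
    linear_combination
      ((b - a) * (a * cos x ^ 2 - b * sin x ^ 2) + a * b) * sin_sq_add_cos_sq x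
  have hnorm_pos := mul_cos_sq_add_mul_sin_sq_pos (pow_pos ha 2) (pow_pos hb 2) x
  refine ((hasDerivAt_id x).fun_add
    (hasDerivAt_arctan_div hnum hden hpos.ne')).congr_deriv ?_
  rw [hquotient_rule, hnorm, sub_div, div_self hnorm_pos.ne', add_sub_cancel, div_eq_mul_inv]

theorem integral_inv_sq_mul_cos_sq_add_sq_mul_sin_sq {a b : ℝ} (ha : 0 < a) (hb : 0 < b)
    (u v : ℝ) :
    ∫ x in u..v, (a ^ 2 * cos x ^ 2 + b ^ 2 * sin x ^ 2)⁻¹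
      = (ellipsePolarAngle a b v - ellipsePolarAngle a b u) / (a * b) := by
  have hcont : Continuous fun x ↦ (a ^ 2 * cos x ^ 2 + b ^ 2 * sin x ^ 2)⁻¹ :=
    Continuous.inv₀ (by fun_prop)
      fun x ↦ (mul_cos_sq_add_mul_sin_sq_pos (pow_pos ha 2) (pow_pos hb 2) x).ne'
  rw [eq_div_iff (by positivity), mul_comm, ← integral_const_mul]
  exact integral_eq_sub_of_hasDerivAt (fun x _ ↦ hasDerivAt_ellipsePolarAngle ha hb x)
    ((hcont.const_mul _).intervalIntegrable u v)

theorem integral_inv_sq_add_sin_sq {k : ℝ} (hk : 0 < k) :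
    ∫ x in (0 : ℝ)..π, (k ^ 2 + sin x ^ 2)⁻¹ = π / (k * √(k ^ 2 + 1)) := by
  have hellipse (x : ℝ) :
      k ^ 2 + sin x ^ 2 = k ^ 2 * cos x ^ 2 + √(k ^ 2 + 1) ^ 2 * sin x ^ 2 := by
    rw [sq_sqrt (by positivity)]
    linear_combination -k ^ 2 * sin_sq_add_cos_sq x
  simp_rw [hellipse]
  rw [integral_inv_sq_mul_cos_sq_add_sq_mul_sin_sq hk (by positivity), ellipsePolarAngle_pi,
    ellipsePolarAngle_zero, sub_zero]

theorem continuous_inv_sq_add_sin_sq {k : ℝ} (hk : k ≠ 0) :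
    Continuous fun x ↦ (k ^ 2 + sin x ^ 2)⁻¹ :=
  Continuous.inv₀ (by fun_prop) fun x ↦ by positivity

theorem integral_arctan_sin_div_mul_sin {k : ℝ} (hk : k ≠ 0) (u v : ℝ) :
    ∫ x in u..v, arctan (sin x / k) * sin x
      = arctan (sin u / k) * cos u - arctan (sin v / k) * cos v
        + k * ∫ x in u..v, cos x ^ 2 * (k ^ 2 + sin x ^ 2)⁻¹ := by
  have harctan (x : ℝ) : HasDerivAt (fun y ↦ arctan (sin y / k))
      (k * cos x * (k ^ 2 + sin x ^ 2)⁻¹) x :=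
    (hasDerivAt_arctan_div (hasDerivAt_sin x) (hasDerivAt_const x k) hk).congr_deriv (by ring)
  have hcos (x : ℝ) : HasDerivAt (fun y ↦ -cos y) (sin x) x := by
    simpa using (hasDerivAt_cos x).fun_neg
  have hcont : Continuous fun x ↦ k * cos x * (k ^ 2 + sin x ^ 2)⁻¹ :=
    (by fun_prop : Continuous fun x ↦ k * cos x).mul (continuous_inv_sq_add_sin_sq hk)
  rw [integral_mul_deriv_eq_deriv_mul (fun x _ ↦ harctan x) (fun x _ ↦ hcos x)
    (hcont.intervalIntegrable u v) (continuous_sin.intervalIntegrable u v),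
    ← integral_const_mul, sub_eq_add_neg, ← intervalIntegral.integral_neg]
  congr 1
  · ring
  · congr 1 with x
    ring

theorem integral_cos_sq_mul_inv_sq_add_sin_sq {k : ℝ} (hk : k ≠ 0) (u v : ℝ) :
    ∫ x in u..v, cos x ^ 2 * (k ^ 2 + sin x ^ 2)⁻¹
      = (k ^ 2 + 1) * (∫ x in u..v, (k ^ 2 + sin x ^ 2)⁻¹) - (v - u) := by
  have hsplit (x : ℝ) : cos x ^ 2 * (k ^ 2 + sin x ^ 2)⁻¹
      = (k ^ 2 + 1) * (k ^ 2 + sin x ^ 2)⁻¹ - 1 := by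
    have : k ^ 2 + sin x ^ 2 ≠ 0 := by positivity
    field_simp
    linear_combination sin_sq_add_cos_sq x
  simp_rw [hsplit]
  rw [integral_sub (((continuous_inv_sq_add_sin_sq hk).const_mul _).intervalIntegrable u v)
    intervalIntegrable_const, integral_const_mul, integral_one]

/-- For `k > 0`, `∫₀^π 2·arctan(sin φ / k)·sin φ dφ = 2π(√(k²+1) − k)`. -/
theorem spherical_inner_integral_beta_zero (k : ℝ) (hk : 0 < k) :
    ∫ φ in (0:ℝ)..π, 2 * Real.arctan (Real.sin φ / k) * Real.sin φ
      = 2 * π * (Real.sqrt (k ^ 2 + 1) - k) := by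
  have hsqrt : √(k ^ 2 + 1) ^ 2 = k ^ 2 + 1 := sq_sqrt (by positivity)
  calc ∫ φ in (0:ℝ)..π, 2 * arctan (sin φ / k) * sin φ
    _ = 2 * ∫ φ in (0:ℝ)..π, arctan (sin φ / k) * sin φ := by
      simp_rw [mul_assoc, integral_const_mul]
    _ = 2 * (k * ∫ φ in (0:ℝ)..π, cos φ ^ 2 * (k ^ 2 + sin φ ^ 2)⁻¹) := by
      simp [integral_arctan_sin_div_mul_sin hk.ne']
    _ = 2 * (k * ((k ^ 2 + 1) * (π / (k * √(k ^ 2 + 1))) - π)) := by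
      rw [integral_cos_sq_mul_inv_sq_add_sin_sq hk.ne', integral_inv_sq_add_sin_sq hk, sub_zero]
    _ = 2 * π * (√(k ^ 2 + 1) - k) := by
      field_simp
      linear_combination -hsqrt
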